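/- Let q = (q(n)) be an increasing sequence of positive reals and δ = (δ(n)) an increasing unbounded sequence of positive reals such that the sequence (δ(n)^{1/q(n)}) is bounded. Then BV(q;δ) coincides with the space of all bounded functions f : [0,1] → ℝ. More precisely, if |f(x)| ≤ C for all x ∈ [0,1], then for every n and every family {I_k}_{k=1}^{s} of nonoverlapping subintervals of [0,1] with each |I_k| ≥ 1/δ(n), one has (∑_{k=1}^{s} |f(I_k)|^{q(n)})^{1/q(n)} ≤ 2C·δ(n)^{1/q(n)}, so f ∈ BV(q;δ); and conversely every f ∈ BV(q;δ) is bounded. -/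

import Mathlib

/-!
The nonoverlapping intervals `I_k` have total length at most `1` and each has length at least
`1 / δ(n)`, so there are at most `δ(n)` of them; every increment of a function bounded by `C` is at
most `2C`, which gives the first bound. Conversely, as soon as `2 ≤ δ(n)`, one of the intervals
`[0, x]` and `[x, 1]` is by itself an admissible family, so `f x` differs from `f 0` or `f 1` by at
most the variation.
-/

open scoped ENNReal
open Filter

/-- A finite family of nonoverlapping subintervals of `[0,1]`, each given as its pair of
endpoints: every interval is nondegenerate, contained in `[0,1]`, and any two of them
have disjoint interiors. -/
def Nonoverlapping (n : ℕ) (I : Fin n → ℝ × ℝ) : Prop :=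
  (∀ i, 0 ≤ (I i).1 ∧ (I i).1 < (I i).2 ∧ (I i).2 ≤ 1) ∧
    ∀ i j, i ≠ j → (I i).2 ≤ (I j).1 ∨ (I j).2 ≤ (I i).1

/-- The generalized Wiener variation `V(f, q; δ)`, as a value in `ℝ≥0∞`. -/
noncomputable def wienerVar (q δ : ℕ → ℝ) (f : ℝ → ℝ) : ℝ≥0∞ :=
  ⨆ (n : ℕ) (s : ℕ) (I : Fin s → ℝ × ℝ) (_ : Nonoverlapping s I)
    (_ : ∀ k, 1 / δ n ≤ (I k).2 - (I k).1),
    ENNReal.ofReal ((∑ k, |f (I k).2 - f (I k).1| ^ q n) ^ (1 / q n))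

theorem rpow_sum_rpow_le_mul_card_rpow {ι : Type*} (t : Finset ι) {a : ι → ℝ} {p M : ℝ}
    (hp : 0 < p) (hM : 0 ≤ M) (ha : ∀ i ∈ t, 0 ≤ a i) (haM : ∀ i ∈ t, a i ≤ M) :
    (∑ i ∈ t, a i ^ p) ^ (1 / p) ≤ M * (t.card : ℝ) ^ (1 / p) := by
  have hsum : ∑ i ∈ t, a i ^ p ≤ t.card * M ^ p := by
    rw [← nsmul_eq_mul]
    exact t.sum_le_card_nsmul _ _ fun i hi => Real.rpow_le_rpow (ha i hi) (haM i hi) hp.le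
  have hnonneg : 0 ≤ ∑ i ∈ t, a i ^ p :=
    t.sum_nonneg fun i hi => Real.rpow_nonneg (ha i hi) p
  calc (∑ i ∈ t, a i ^ p) ^ (1 / p) ≤ (t.card * M ^ p) ^ (1 / p) := by gcongr
    _ = (t.card : ℝ) ^ (1 / p) * (M ^ p) ^ (1 / p) :=
        Real.mul_rpow (Nat.cast_nonneg _) (Real.rpow_nonneg hM p)
    _ = M * (t.card : ℝ) ^ (1 / p) := by
        rw [one_div, Real.rpow_rpow_inv hM hp.ne', mul_comm]

namespace Nonoverlapping

variable {s : ℕ} {I : Fin s → ℝ × ℝ}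

theorem pairwise_disjoint_Ioo (hI : Nonoverlapping s I) :
    Pairwise (Function.onFun Disjoint fun k => Set.Ioo (I k).1 (I k).2) := fun i j hij =>
  Set.Ioo_disjoint_Ioo.2 <| (hI.2 i j hij).elim
    (fun h => (min_le_left _ _).trans (h.trans (le_max_right _ _)))
    (fun h => (min_le_right _ _).trans (h.trans (le_max_left _ _)))

theorem sum_length_le_one (hI : Nonoverlapping s I) : ∑ k, ((I k).2 - (I k).1) ≤ 1 := by
  have hsubset : ⋃ k, Set.Ioo (I k).1 (I k).2 ⊆ Set.Icc 0 1 := Set.iUnion_subset fun k =>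
    Set.Ioo_subset_Icc_self.trans (Set.Icc_subset_Icc (hI.1 k).1 (hI.1 k).2.2)
  have hvolume := MeasureTheory.measure_mono (μ := MeasureTheory.volume) hsubset
  rw [MeasureTheory.measure_iUnion hI.pairwise_disjoint_Ioo fun _ => measurableSet_Ioo,
    tsum_fintype] at hvolume
  simp only [Real.volume_Ioo, Real.volume_Icc, sub_zero] at hvolume
  rw [← ENNReal.ofReal_sum_of_nonneg fun k _ => sub_nonneg.2 (hI.1 k).2.1.le] at hvolume
  exact (ENNReal.ofReal_le_ofReal_iff zero_le_one).1 hvolume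

theorem card_le {d : ℝ} (hI : Nonoverlapping s I) (hd : 0 < d)
    (hlength : ∀ k, 1 / d ≤ (I k).2 - (I k).1) : (s : ℝ) ≤ d := by
  have hsum : s * (1 / d) ≤ 1 := calc
    s * (1 / d) = ∑ _k : Fin s, 1 / d := by simp
    _ ≤ ∑ k, ((I k).2 - (I k).1) := Finset.sum_le_sum fun k _ => hlength k
    _ ≤ 1 := hI.sum_length_le_one
  rwa [mul_one_div, div_le_one hd] at hsum

theorem rpow_sum_abs_sub_rpow_le {f : ℝ → ℝ} {C p d : ℝ} (hI : Nonoverlapping s I)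
    (hf : ∀ x ∈ Set.Icc (0 : ℝ) 1, |f x| ≤ C) (hp : 0 < p) (hd : 0 < d)
    (hlength : ∀ k, 1 / d ≤ (I k).2 - (I k).1) :
    (∑ k, |f (I k).2 - f (I k).1| ^ p) ^ (1 / p) ≤ 2 * C * d ^ (1 / p) := by
  have hC : 0 ≤ C := (abs_nonneg _).trans (hf 0 (by simp))
  have hincrement (k : Fin s) : |f (I k).2 - f (I k).1| ≤ 2 * C := by
    obtain ⟨hleft, hlt, hright⟩ := hI.1 k
    calc |f (I k).2 - f (I k).1| ≤ |f (I k).2| + |f (I k).1| := abs_sub _ _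
      _ ≤ C + C :=
          add_le_add (hf _ ⟨hleft.trans hlt.le, hright⟩) (hf _ ⟨hleft, hlt.le.trans hright⟩)
      _ = 2 * C := (two_mul C).symm
  calc (∑ k, |f (I k).2 - f (I k).1| ^ p) ^ (1 / p) ≤ 2 * C * (s : ℝ) ^ (1 / p) := by
        simpa only [Finset.card_univ, Fintype.card_fin] using
          rpow_sum_rpow_le_mul_card_rpow Finset.univ hp (by positivity : 0 ≤ 2 * C)
            (fun k _ => abs_nonneg (f (I k).2 - f (I k).1)) fun k _ => hincrement k
    _ ≤ 2 * C * d ^ (1 / p) := by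
        gcongr
        exact hI.card_le hd hlength

end Nonoverlapping

theorem nonoverlapping_singleton {a b : ℝ} (ha : 0 ≤ a) (hab : a < b) (hb : b ≤ 1) :
    Nonoverlapping 1 fun _ => (a, b) :=
  ⟨fun _ => ⟨ha, hab, hb⟩, fun i j hij => absurd (Subsingleton.elim i j) hij⟩

section WienerVariation

variable {q δ : ℕ → ℝ} {f : ℝ → ℝ}

theorem wienerVar_le_iff {M : ℝ≥0∞} :
    wienerVar q δ f ≤ M ↔ ∀ (n s : ℕ) (I : Fin s → ℝ × ℝ), Nonoverlapping s I →
      (∀ k, 1 / δ n ≤ (I k).2 - (I k).1) →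
      ENNReal.ofReal ((∑ k, |f (I k).2 - f (I k).1| ^ q n) ^ (1 / q n)) ≤ M := by
  simp only [wienerVar, iSup_le_iff]

theorem wienerVar_le_of_abs_le {B C : ℝ} (hq : ∀ n, 0 < q n) (hδ : ∀ n, 0 < δ n)
    (hB : ∀ n, δ n ^ (1 / q n) ≤ B) (hf : ∀ x ∈ Set.Icc (0 : ℝ) 1, |f x| ≤ C) :
    wienerVar q δ f ≤ ENNReal.ofReal (2 * C * B) := by
  have hC : 0 ≤ C := (abs_nonneg _).trans (hf 0 (by simp))
  refine wienerVar_le_iff.2 fun n s I hI hlength => ENNReal.ofReal_le_ofReal ?_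
  calc (∑ k, |f (I k).2 - f (I k).1| ^ q n) ^ (1 / q n) ≤ 2 * C * δ n ^ (1 / q n) :=
        hI.rpow_sum_abs_sub_rpow_le hf (hq n) (hδ n) hlength
    _ ≤ 2 * C * B := by
        gcongr
        exact hB n

theorem abs_sub_le_toReal_wienerVar {n : ℕ} {a b : ℝ} (hV : wienerVar q δ f < ⊤) (hq : 0 < q n)
    (ha : 0 ≤ a) (hab : a < b) (hb : b ≤ 1) (hlength : 1 / δ n ≤ b - a) :
    |f b - f a| ≤ (wienerVar q δ f).toReal := by
  have hsum := wienerVar_le_iff.1 (le_refl (wienerVar q δ f)) n 1 _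
    (nonoverlapping_singleton ha hab hb) fun _ => hlength
  rw [Fin.sum_univ_one, one_div, Real.rpow_rpow_inv (abs_nonneg _) hq.ne'] at hsum
  exact (ENNReal.ofReal_le_iff_le_toReal hV.ne).1 hsum

theorem abs_le_max_add_toReal_wienerVar {n : ℕ} {x : ℝ} (hV : wienerVar q δ f < ⊤) (hq : 0 < q n)
    (hδ : 2 ≤ δ n) (hx : x ∈ Set.Icc (0 : ℝ) 1) :
    |f x| ≤ max |f 0| |f 1| + (wienerVar q δ f).toReal := by
  have hhalf : 1 / δ n ≤ 1 / 2 := one_div_le_one_div_of_le two_pos hδ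
  rcases le_total (1 / 2) x with h | h
  · have hincrement : |f x - f 0| ≤ (wienerVar q δ f).toReal :=
      abs_sub_le_toReal_wienerVar hV hq le_rfl (by linarith) hx.2 (by linarith)
    linarith [abs_sub_abs_le_abs_sub (f x) (f 0), le_max_left |f 0| |f 1|]
  · have hincrement : |f 1 - f x| ≤ (wienerVar q δ f).toReal :=
      abs_sub_le_toReal_wienerVar hV hq hx.1 (by linarith) le_rfl (by linarith)
    rw [abs_sub_comm] at hincrement
    linarith [abs_sub_abs_le_abs_sub (f x) (f 1), le_max_right |f 0| |f 1|]

end WienerVariation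

theorem wiener_class_eq_bounded_general
    (q δ : ℕ → ℝ) (hqpos : ∀ n, 0 < q n) (hδpos : ∀ n, 0 < δ n) (hδtwo : ∃ n, 2 ≤ δ n)
    (hbdd : ∃ B : ℝ, ∀ n, δ n ^ (1 / q n) ≤ B) :
    (∀ f : ℝ → ℝ, ∀ C : ℝ, (∀ x ∈ Set.Icc (0 : ℝ) 1, |f x| ≤ C) →
      (∀ (n s : ℕ) (I : Fin s → ℝ × ℝ), Nonoverlapping s I →
          (∀ k, 1 / δ n ≤ (I k).2 - (I k).1) →
          (∑ k, |f (I k).2 - f (I k).1| ^ q n) ^ (1 / q n) ≤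
            2 * C * δ n ^ (1 / q n)) ∧
        wienerVar q δ f < ⊤) ∧
    (∀ f : ℝ → ℝ, wienerVar q δ f < ⊤ →
      ∃ C : ℝ, ∀ x ∈ Set.Icc (0 : ℝ) 1, |f x| ≤ C) := by
  obtain ⟨B, hB⟩ := hbdd
  obtain ⟨n, hn⟩ := hδtwo
  refine ⟨fun f C hf => ⟨fun n s I hI hlength => ?_, ?_⟩, fun f hV =>
    ⟨max |f 0| |f 1| + (wienerVar q δ f).toReal, fun x hx => ?_⟩⟩
  · exact hI.rpow_sum_abs_sub_rpow_le hf (hqpos n) (hδpos n) hlength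
  · exact (wienerVar_le_of_abs_le hqpos hδpos hB hf).trans_lt ENNReal.ofReal_lt_top
  · exact abs_le_max_add_toReal_wienerVar hV (hqpos n) hn hx

/-- If the sequence `δ(n)^{1/q(n)}` is bounded, then `BV(q;δ)` is exactly the class of
bounded functions on `[0,1]`: if `|f| ≤ C` on `[0,1]` then every admissible sum satisfies
`(∑_k |f(I_k)|^{q(n)})^{1/q(n)} ≤ 2·C·δ(n)^{1/q(n)}`, whence `f ∈ BV(q;δ)`; conversely,
every `f ∈ BV(q;δ)` is bounded on `[0,1]`. -/
theorem wiener_class_eq_bounded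
    (q δ : ℕ → ℝ)
    (hqpos : ∀ n, 0 < q n) (hq : StrictMono q)
    (hδpos : ∀ n, 0 < δ n) (hδ : StrictMono δ)
    (hδunbdd : Tendsto δ atTop atTop)
    (hbdd : ∃ B : ℝ, ∀ n, δ n ^ (1 / q n) ≤ B) :
    (∀ f : ℝ → ℝ, ∀ C : ℝ, (∀ x ∈ Set.Icc (0 : ℝ) 1, |f x| ≤ C) →
      (∀ (n s : ℕ) (I : Fin s → ℝ × ℝ), Nonoverlapping s I →
          (∀ k, 1 / δ n ≤ (I k).2 - (I k).1) →
          (∑ k, |f (I k).2 - f (I k).1| ^ q n) ^ (1 / q n) ≤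
            2 * C * δ n ^ (1 / q n)) ∧
        wienerVar q δ f < ⊤) ∧
    (∀ f : ℝ → ℝ, wienerVar q δ f < ⊤ →
      ∃ C : ℝ, ∀ x ∈ Set.Icc (0 : ℝ) 1, |f x| ≤ C) :=
  wiener_class_eq_bounded_general q δ hqpos hδpos (hδunbdd.eventually_ge_atTop 2).exists hbdd
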